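/- Let ℰ, 𝒜 ∈ ℝ^{N×N} with ℰ invertible and the pencil λℰ − 𝒜 c-stable, let 𝒞 ∈ ℝ^{p×N}, and let Ω = [−ω₂, −ω₁] ∪ [ω₁, ω₂] with 0 ≤ ω₁ < ω₂ < ∞. Define F_Ω = (1/2π) ∫_Ω (iωℰ − 𝒜)^{-1} dω and Q_Ω = (1/2π) ∫_Ω (−iωℰ − 𝒜)^{-ᵀ} 𝒞ᵀ 𝒞 (iωℰ − 𝒜)^{-1} dω. Then Q_Ω is a real symmetric positive semidefinite matrix and satisfies the frequency-limited Lyapunov equation 𝒜ᵀ Q_Ω ℰ + ℰᵀ Q_Ω 𝒜 + 𝒞_Ωᵀ 𝒞 + 𝒞ᵀ 𝒞_Ω = 0, where 𝒞_Ω = 𝒞 F_Ω ℰ. -/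

import Mathlib

open Matrix MeasureTheory

noncomputable section

/-- A matrix pencil `λℰ − 𝒜` (with real square matrices) is c-stable if all complex `λ`
with `det (λℰ − 𝒜) = 0` lie in the open left complex half-plane. -/
def CStablePencil {N : ℕ} (ℰ 𝒜 : Matrix (Fin N) (Fin N) ℝ) : Prop :=
  ∀ μ : ℂ, (μ • ℰ.map Complex.ofReal - 𝒜.map Complex.ofReal).det = 0 → μ.re < 0

/-- Complexification of a real matrix. -/
def toC {a b : ℕ} (M : Matrix (Fin a) (Fin b) ℝ) : Matrix (Fin a) (Fin b) ℂ :=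
  M.map Complex.ofReal

/-!
The Lyapunov equation already holds under the integral sign: for `P = zE − A`, `R = P⁻¹` and
`G = R* W R` one has `G P = R* W` and `P* G = W R`, so `E* (G P) + (P* G) E` equals both
`E* R* W + W R E` and `2 (Re z) E* G E − E* G A − A* G E`, where the term in `E* G E` vanishes for
`z = iω`. Integrating over `Ω` gives the equation with adjoints, in any Banach `*`-algebra, and
`W = C* C ≥ 0` makes the integral nonnegative. For real matrices and symmetric `Ω`, the relation
`R(z̄) = conj R(z)` makes both integrals real, so that adjoints become transposes.
-/

open scoped ComplexConjugate

section PencilResolvent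

variable {𝔄 : Type*} [Ring 𝔄] [Algebra ℂ 𝔄]

/-- The resolvent `(zE − A)⁻¹` of the pencil `zE − A`, with value `0` at the eigenvalues. -/
def pencilResolvent (E A : 𝔄) (z : ℂ) : 𝔄 :=
  Ring.inverse (z • E - A)

/-- The integrand `R(z)* W R(z)` of the observability Gramian with output weight `W`, where `R` is
the resolvent of the pencil `zE − A`. An output matrix `C` enters through the weight `W = C* C`. -/
def gramianIntegrand [Star 𝔄] (E A W : 𝔄) (z : ℂ) : 𝔄 :=
  star (pencilResolvent E A z) * W * pencilResolvent E A z

lemma gramianIntegrand_lyapunov [StarRing 𝔄] [StarModule ℂ 𝔄] {E A : 𝔄} {z : ℂ}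
    (hz : IsUnit (z • E - A)) (W : 𝔄) :
    star A * gramianIntegrand E A W z * E + star E * gramianIntegrand E A W z * A +
        star E * star (pencilResolvent E A z) * W + W * pencilResolvent E A z * E =
      (z + conj z) • (star E * gramianIntegrand E A W z * E) := by
  have hright : gramianIntegrand E A W z * (z • E - A) = star (pencilResolvent E A z) * W := by
    rw [gramianIntegrand, pencilResolvent, mul_assoc, Ring.inverse_mul_cancel _ hz, mul_one]
  have hleft : star (z • E - A) * gramianIntegrand E A W z = W * pencilResolvent E A z := by
    rw [gramianIntegrand, pencilResolvent, ← mul_assoc, ← mul_assoc, ← star_mul,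
      Ring.inverse_mul_cancel _ hz, star_one, one_mul]
  rw [mul_assoc (star E) (star _), ← hright, ← hleft]
  simp only [star_sub, star_smul, sub_mul, mul_sub, smul_mul_assoc, mul_smul_comm, add_smul,
    mul_assoc, starRingEnd_apply]
  abel

end PencilResolvent

section FrequencyLimited

variable {𝔄 : Type*} [NormedRing 𝔄] [NormedAlgebra ℂ 𝔄]

/-- The factor `F_Ω = (1/2π) ∫_Ω (iωE − A)⁻¹ dω` of the frequency-limited output `C F_Ω E`. -/
def frequencyLimitedResolvent (E A : 𝔄) (Ω : Set ℝ) : 𝔄 :=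
  (1 / (2 * Real.pi)) • ∫ ω in Ω, pencilResolvent E A (Complex.I * (ω : ℂ))

/-- The frequency-limited observability Gramian `Q_Ω = (1/2π) ∫_Ω R(iω)* W R(iω) dω` with output
weight `W`, where `R` is the resolvent of the pencil `zE − A`. -/
def frequencyLimitedGramian [Star 𝔄] (E A W : 𝔄) (Ω : Set ℝ) : 𝔄 :=
  (1 / (2 * Real.pi)) • ∫ ω in Ω, gramianIntegrand E A W (Complex.I * (ω : ℂ))

lemma integral_mul_mul_of_integrable {X : Type*} [MeasurableSpace X] {μ : Measure X} {f : X → 𝔄}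
    (hf : Integrable f μ) (a b : 𝔄) :
    ∫ x, a * f x * b ∂μ = a * (∫ x, f x ∂μ) * b := by
  rw [integral_mul_const_of_integrable (hf.const_mul a), integral_const_mul_of_integrable hf]

variable {E A : 𝔄} {Ω : Set ℝ}

lemma continuousOn_pencilResolvent [CompleteSpace 𝔄]
    (hreg : ∀ ω ∈ Ω, IsUnit ((Complex.I * (ω : ℂ)) • E - A)) :
    ContinuousOn (fun ω : ℝ => pencilResolvent E A (Complex.I * (ω : ℂ))) Ω := by
  intro ω hω
  obtain ⟨u, hu⟩ := hreg ω hω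
  have hinv : ContinuousAt Ring.inverse ((Complex.I * (ω : ℂ)) • E - A) :=
    hu ▸ NormedRing.inverse_continuousAt u
  have hpencil : ContinuousAt (fun ω : ℝ => (Complex.I * (ω : ℂ)) • E - A) ω := by fun_prop
  exact (hinv.comp (f := fun ω : ℝ => (Complex.I * (ω : ℂ)) • E - A) hpencil).continuousWithinAt

lemma integrableOn_pencilResolvent [CompleteSpace 𝔄] (hΩ : IsCompact Ω)
    (hreg : ∀ ω ∈ Ω, IsUnit ((Complex.I * (ω : ℂ)) • E - A)) :
    IntegrableOn (fun ω : ℝ => pencilResolvent E A (Complex.I * (ω : ℂ))) Ω :=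
  (continuousOn_pencilResolvent hreg).integrableOn_compact hΩ

variable [StarRing 𝔄] [ContinuousStar 𝔄]

lemma integral_star [StarModule ℂ 𝔄] {X : Type*} [MeasurableSpace X] {μ : Measure X} (f : X → 𝔄) :
    ∫ x, star (f x) ∂μ = star (∫ x, f x ∂μ) :=
  (starL' ℝ : 𝔄 ≃L[ℝ] 𝔄).integral_comp_comm f

lemma integrableOn_gramianIntegrand [CompleteSpace 𝔄] (hΩ : IsCompact Ω)
    (hreg : ∀ ω ∈ Ω, IsUnit ((Complex.I * (ω : ℂ)) • E - A)) (W : 𝔄) :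
    IntegrableOn (fun ω : ℝ => gramianIntegrand E A W (Complex.I * (ω : ℂ))) Ω :=
  have hR := continuousOn_pencilResolvent hreg
  ((hR.star.mul continuousOn_const).mul hR).integrableOn_compact hΩ

theorem frequencyLimitedGramian_lyapunov [StarModule ℂ 𝔄] [CompleteSpace 𝔄] (hΩ : IsCompact Ω)
    (hreg : ∀ ω ∈ Ω, IsUnit ((Complex.I * (ω : ℂ)) • E - A)) (W : 𝔄) :
    star A * frequencyLimitedGramian E A W Ω * E + star E * frequencyLimitedGramian E A W Ω * A +
      star E * star (frequencyLimitedResolvent E A Ω) * W +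
      W * frequencyLimitedResolvent E A Ω * E = 0 := by
  set R : ℝ → 𝔄 := fun ω => pencilResolvent E A (Complex.I * (ω : ℂ)) with hRdef
  set G : ℝ → 𝔄 := fun ω => gramianIntegrand E A W (Complex.I * (ω : ℂ)) with hGdef
  have hR : IntegrableOn R Ω := integrableOn_pencilResolvent hΩ hreg
  have hR' : IntegrableOn (fun ω => star (R ω)) Ω :=
    (starL' ℝ : 𝔄 ≃L[ℝ] 𝔄).integrable_comp_iff.mpr hR
  have hG : IntegrableOn G Ω := integrableOn_gramianIntegrand hΩ hreg W
  have hmul {f : ℝ → 𝔄} (hf : Integrable f (volume.restrict Ω)) (a b : 𝔄) :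
      Integrable (fun ω => a * f ω * b) (volume.restrict Ω) := (hf.const_mul a).mul_const b
  have hintegral : star A * (∫ ω in Ω, G ω) * E + star E * (∫ ω in Ω, G ω) * A +
      star E * star (∫ ω in Ω, R ω) * W + W * (∫ ω in Ω, R ω) * E = 0 := by
    calc
      _ = ∫ ω in Ω, (star A * G ω * E + star E * G ω * A + star E * star (R ω) * W +
            W * R ω * E) := by
        rw [integral_add (((hmul hG _ _).fun_add (hmul hG _ _)).fun_add (hmul hR' _ _))
            (hmul hR _ _),
          integral_add ((hmul hG _ _).fun_add (hmul hG _ _)) (hmul hR' _ _),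
          integral_add (hmul hG _ _) (hmul hG _ _), integral_mul_mul_of_integrable hG,
          integral_mul_mul_of_integrable hG, integral_mul_mul_of_integrable hR', integral_star,
          integral_mul_mul_of_integrable hR]
      _ = 0 := setIntegral_eq_zero_of_forall_eq_zero fun ω hω => by
        simp [hRdef, hGdef, gramianIntegrand_lyapunov (hreg ω hω)]
  simpa only [frequencyLimitedGramian, frequencyLimitedResolvent, smul_add, smul_zero,
    mul_smul_comm, smul_mul_assoc, star_smul, star_trivial] using
    congrArg ((1 / (2 * Real.pi)) • ·) hintegral

end FrequencyLimited

lemma frequencyLimitedGramian_nonneg {𝔄 : Type*} [CStarAlgebra 𝔄] [PartialOrder 𝔄]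
    [StarOrderedRing 𝔄] (E A : 𝔄) {W : 𝔄} (hW : 0 ≤ W) (Ω : Set ℝ) :
    0 ≤ frequencyLimitedGramian E A W Ω :=
  smul_nonneg (by positivity) (integral_nonneg fun _ => star_left_conjugate_nonneg hW _)

lemma conj_setIntegral_eq_self {𝕜 : Type*} [RCLike 𝕜] {Ω : Set ℝ} (hΩ : -Ω = Ω) {f : ℝ → 𝕜}
    (hf : ∀ ω, f (-ω) = conj (f ω)) : conj (∫ ω in Ω, f ω) = ∫ ω in Ω, f ω := by
  have hneg := (Measure.measurePreserving_neg (volume : Measure ℝ)).setIntegral_preimage_emb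
    (MeasurableEquiv.neg ℝ).measurableEmbedding f Ω
  rw [Set.neg_preimage, hΩ] at hneg
  simpa only [hf, integral_conj] using hneg

section Matrix

open scoped Matrix.Norms.L2Operator MatrixOrder ComplexOrder

variable {n : Type*}

lemma map_conj_map_ofReal {m : Type*} (M : Matrix m n ℝ) :
    (M.map Complex.ofReal).map conj = M.map Complex.ofReal := by
  ext i j
  simp

lemma conjTranspose_eq_transpose_of_map_conj {m : Type*} {M : Matrix m n ℂ}
    (hM : M.map conj = M) : Mᴴ = Mᵀ :=
  congrArg transpose hM

lemma map_conj_smul {m : Type*} (r : ℝ) (M : Matrix m n ℂ) :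
    (r • M).map conj = r • M.map conj :=
  Matrix.map_smul _ r (by simp [Complex.real_smul]) M

lemma posSemidef_map_re {M : Matrix n n ℂ} (hM : M.PosSemidef) :
    (M.map Complex.re).PosSemidef := by
  refine ⟨?_, fun x => ?_⟩
  · ext i j
    simp [← hM.isHermitian.apply i j]
  · have hx := (Complex.nonneg_iff.mp (hM.2 (x.mapRange Complex.ofReal rfl))).1
    simpa [Finsupp.sum, Finsupp.support_mapRange_of_injective rfl x Complex.ofReal_injective]
      using hx

variable [Fintype n] [DecidableEq n]

lemma integral_matrix_apply {m X : Type*} [Fintype m] [MeasurableSpace X] {μ : Measure X}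
    {f : X → Matrix m n ℂ} (hf : Integrable f μ) (i : m) (j : n) :
    (∫ x, f x ∂μ) i j = ∫ x, f x i j ∂μ :=
  ((Matrix.entryLinearMap ℝ ℂ i j).toContinuousLinearMap.integral_comp_comm hf).symm

lemma pencilResolvent_conj {E A : Matrix n n ℂ} (hE : E.map conj = E) (hA : A.map conj = A)
    (z : ℂ) : pencilResolvent E A (conj z) = (pencilResolvent E A z).map conj := by
  have hconj (M : Matrix n n ℂ) : M.map conj = Mᴴᵀ := rfl
  rw [hconj] at hE hA ⊢
  rw [pencilResolvent, pencilResolvent, ← nonsing_inv_eq_ringInverse, ← nonsing_inv_eq_ringInverse,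
    conjTranspose_nonsing_inv, transpose_nonsing_inv, conjTranspose_sub, conjTranspose_smul,
    transpose_sub, transpose_smul, hE, hA]
  rfl

lemma gramianIntegrand_conj {E A W : Matrix n n ℂ} (hE : E.map conj = E) (hA : A.map conj = A)
    (hW : W.map conj = W) (z : ℂ) :
    gramianIntegrand E A W (conj z) = (gramianIntegrand E A W z).map conj := by
  simp only [gramianIntegrand, pencilResolvent_conj hE hA, Matrix.map_mul, hW]
  rfl

lemma map_conj_setIntegral_eq_self {Ω : Set ℝ} (hΩ : -Ω = Ω) {f : ℂ → Matrix n n ℂ}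
    (hint : IntegrableOn (fun ω : ℝ => f (Complex.I * (ω : ℂ))) Ω)
    (hf : ∀ z, f (conj z) = (f z).map conj) :
    (∫ ω in Ω, f (Complex.I * (ω : ℂ))).map conj = ∫ ω in Ω, f (Complex.I * (ω : ℂ)) := by
  ext i j
  rw [Matrix.map_apply, integral_matrix_apply hint]
  refine conj_setIntegral_eq_self hΩ fun ω => ?_
  rw [← Matrix.map_apply (f := conj), ← hf]
  simp

lemma frequencyLimitedResolvent_map_conj {E A : Matrix n n ℂ} (hE : E.map conj = E)
    (hA : A.map conj = A) {Ω : Set ℝ} (hΩ : IsCompact Ω) (hsymm : -Ω = Ω)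
    (hreg : ∀ ω ∈ Ω, IsUnit ((Complex.I * (ω : ℂ)) • E - A)) :
    (frequencyLimitedResolvent E A Ω).map conj = frequencyLimitedResolvent E A Ω := by
  rw [frequencyLimitedResolvent, map_conj_smul, map_conj_setIntegral_eq_self hsymm
    (integrableOn_pencilResolvent hΩ hreg) (pencilResolvent_conj hE hA)]

lemma frequencyLimitedGramian_map_conj {E A W : Matrix n n ℂ} (hE : E.map conj = E)
    (hA : A.map conj = A) (hW : W.map conj = W) {Ω : Set ℝ} (hΩ : IsCompact Ω) (hsymm : -Ω = Ω)
    (hreg : ∀ ω ∈ Ω, IsUnit ((Complex.I * (ω : ℂ)) • E - A)) :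
    (frequencyLimitedGramian E A W Ω).map conj = frequencyLimitedGramian E A W Ω := by
  rw [frequencyLimitedGramian, map_conj_smul, map_conj_setIntegral_eq_self hsymm
    (integrableOn_gramianIntegrand hΩ hreg W) (gramianIntegrand_conj hE hA hW)]

lemma frequencyLimitedResolvent_apply {E A : Matrix n n ℂ} {Ω : Set ℝ} (hΩ : IsCompact Ω)
    (hreg : ∀ ω ∈ Ω, IsUnit ((Complex.I * (ω : ℂ)) • E - A)) (i j : n) :
    frequencyLimitedResolvent E A Ω i j =
      ((1 / (2 * Real.pi) : ℝ) : ℂ) * ∫ ω in Ω, ((Complex.I * (ω : ℂ)) • E - A)⁻¹ i j := by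
  rw [frequencyLimitedResolvent, Matrix.smul_apply,
    integral_matrix_apply (integrableOn_pencilResolvent hΩ hreg), Complex.real_smul]
  simp only [pencilResolvent, nonsing_inv_eq_ringInverse]

lemma frequencyLimitedGramian_apply {p : Type*} [Fintype p] {E A : Matrix n n ℂ}
    {C : Matrix p n ℂ} (hE : E.map conj = E) (hA : A.map conj = A) (hC : C.map conj = C)
    {Ω : Set ℝ} (hΩ : IsCompact Ω)
    (hreg : ∀ ω ∈ Ω, IsUnit ((Complex.I * (ω : ℂ)) • E - A)) (i j : n) :
    frequencyLimitedGramian E A (Cᴴ * C) Ω i j =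
      ((1 / (2 * Real.pi) : ℝ) : ℂ) * ∫ ω in Ω, (((-(Complex.I * (ω : ℂ))) • E - A)⁻¹ᵀ * Cᵀ * C *
        ((Complex.I * (ω : ℂ)) • E - A)⁻¹) i j := by
  have hconj (ω : ℝ) : -(Complex.I * (ω : ℂ)) = conj (Complex.I * (ω : ℂ)) := by simp
  have hR (ω : ℝ) : ((-(Complex.I * (ω : ℂ))) • E - A)⁻¹ᵀ =
      star (pencilResolvent E A (Complex.I * (ω : ℂ))) := by
    rw [hconj, nonsing_inv_eq_ringInverse]
    exact congrArg transpose (pencilResolvent_conj hE hA _)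
  have hG (ω : ℝ) : ((-(Complex.I * (ω : ℂ))) • E - A)⁻¹ᵀ * Cᵀ * C *
      ((Complex.I * (ω : ℂ)) • E - A)⁻¹ = gramianIntegrand E A (Cᴴ * C) (Complex.I * (ω : ℂ)) := by
    rw [hR, ← conjTranspose_eq_transpose_of_map_conj hC, gramianIntegrand, ← Matrix.mul_assoc,
      nonsing_inv_eq_ringInverse, pencilResolvent]
  rw [frequencyLimitedGramian, Matrix.smul_apply,
    integral_matrix_apply (integrableOn_gramianIntegrand hΩ hreg _), Complex.real_smul]
  simp only [hG]

theorem frequency_limited_observability_gramian_general {p : Type*} [Fintype p]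
    (E A : Matrix n n ℂ) (C : Matrix p n ℂ) (hE : E.map conj = E) (hA : A.map conj = A)
    (hC : C.map conj = C) {Ω : Set ℝ} (hΩ : IsCompact Ω) (hsymm : -Ω = Ω)
    (hreg : ∀ ω ∈ Ω, ((Complex.I * (ω : ℂ)) • E - A).det ≠ 0) (F Q : Matrix n n ℂ)
    (hF : F = Matrix.of fun i j =>
      ((1 / (2 * Real.pi) : ℝ) : ℂ) * ∫ ω in Ω, ((Complex.I * (ω : ℂ)) • E - A)⁻¹ i j)
    (hQ : Q = Matrix.of fun i j =>
      ((1 / (2 * Real.pi) : ℝ) : ℂ) * ∫ ω in Ω, (((-(Complex.I * (ω : ℂ))) • E - A)⁻¹ᵀ * Cᵀ * C *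
        ((Complex.I * (ω : ℂ)) • E - A)⁻¹) i j) :
    (∀ i j, (Q i j).im = 0) ∧ (Q.map Complex.re).PosSemidef ∧
    Aᵀ * Q * E + Eᵀ * Q * A + (C * F * E)ᵀ * C + Cᵀ * (C * F * E) = 0 := by
  have hunit (ω : ℝ) (hω : ω ∈ Ω) : IsUnit ((Complex.I * (ω : ℂ)) • E - A) :=
    (Matrix.isUnit_iff_isUnit_det _).mpr (hreg ω hω).isUnit
  have hW : (Cᴴ * C).map conj = Cᴴ * C := by
    rw [Matrix.map_mul, hC, conjTranspose_eq_transpose_of_map_conj hC, transpose_map, hC]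
  obtain rfl : F = frequencyLimitedResolvent E A Ω := by
    ext i j
    rw [frequencyLimitedResolvent_apply hΩ hunit, hF, Matrix.of_apply]
  obtain rfl : Q = frequencyLimitedGramian E A (Cᴴ * C) Ω := by
    ext i j
    rw [frequencyLimitedGramian_apply hE hA hC hΩ hunit, hQ, Matrix.of_apply]
  have hFreal := frequencyLimitedResolvent_map_conj hE hA hΩ hsymm hunit
  have hQreal := frequencyLimitedGramian_map_conj hE hA hW hΩ hsymm hunit
  have hQpos := frequencyLimitedGramian_nonneg E A (posSemidef_conjTranspose_mul_self C).nonneg Ω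
  refine ⟨fun i j => Complex.conj_eq_iff_im.mp (congrFun₂ hQreal i j),
    posSemidef_map_re (nonneg_iff_posSemidef.mp hQpos), ?_⟩
  simp only [transpose_mul, ← conjTranspose_eq_transpose_of_map_conj, hE, hA, hC, hFreal,
    Matrix.mul_assoc]
  simpa only [star_eq_conjTranspose, Matrix.mul_assoc] using
    frequencyLimitedGramian_lyapunov hΩ hunit (Cᴴ * C)

end Matrix

/-- For a c-stable pencil with invertible `ℰ` and the symmetric frequency range
`Ω = [−ω₂, −ω₁] ∪ [ω₁, ω₂]`, the frequency-limited observability Gramian factor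
`Q_Ω = (1/2π) ∫_Ω (−iωℰ − 𝒜)⁻ᵀ 𝒞ᵀ 𝒞 (iωℰ − 𝒜)⁻¹ dω` is real symmetric positive
semidefinite and satisfies the frequency-limited Lyapunov equation
`𝒜ᵀ Q_Ω ℰ + ℰᵀ Q_Ω 𝒜 + 𝒞_Ωᵀ 𝒞 + 𝒞ᵀ 𝒞_Ω = 0` with `𝒞_Ω = 𝒞 F_Ω ℰ`, where
`F_Ω = (1/2π) ∫_Ω (iωℰ − 𝒜)⁻¹ dω`. -/
theorem frequency_limited_observability_gramian {N p : ℕ}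
    (ℰ 𝒜 : Matrix (Fin N) (Fin N) ℝ) (𝒞 : Matrix (Fin p) (Fin N) ℝ)
    (hE : IsUnit ℰ) (hstab : CStablePencil ℰ 𝒜)
    (ω₁ ω₂ : ℝ) (hω₁ : 0 ≤ ω₁) (hω₁₂ : ω₁ < ω₂)
    (FΩ QΩ : Matrix (Fin N) (Fin N) ℂ)
    (hF : FΩ = Matrix.of fun i j =>
      ((1 / (2 * Real.pi) : ℝ) : ℂ) *
        ∫ ω in Set.Icc (-ω₂) (-ω₁) ∪ Set.Icc ω₁ ω₂,
          ((((Complex.I * (ω : ℂ)) • toC ℰ - toC 𝒜)⁻¹) i j))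
    (hQ : QΩ = Matrix.of fun i j =>
      ((1 / (2 * Real.pi) : ℝ) : ℂ) *
        ∫ ω in Set.Icc (-ω₂) (-ω₁) ∪ Set.Icc ω₁ ω₂,
          (((((-(Complex.I * (ω : ℂ))) • toC ℰ - toC 𝒜)⁻¹)ᵀ * (toC 𝒞)ᵀ * toC 𝒞 *
            ((Complex.I * (ω : ℂ)) • toC ℰ - toC 𝒜)⁻¹) i j)) :
    (∀ i j, (QΩ i j).im = 0) ∧
    (Matrix.of fun i j => (QΩ i j).re : Matrix (Fin N) (Fin N) ℝ).PosSemidef ∧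
    (toC 𝒜)ᵀ * QΩ * toC ℰ + (toC ℰ)ᵀ * QΩ * toC 𝒜 +
      (toC 𝒞 * FΩ * toC ℰ)ᵀ * toC 𝒞 + (toC 𝒞)ᵀ * (toC 𝒞 * FΩ * toC ℰ) = 0 := by
  exact frequency_limited_observability_gramian_general (toC ℰ) (toC 𝒜) (toC 𝒞)
    (map_conj_map_ofReal ℰ) (map_conj_map_ofReal 𝒜) (map_conj_map_ofReal 𝒞)
    (isCompact_Icc.union isCompact_Icc) (by simp [Set.union_neg, Set.union_comm])
    (fun ω _ hdet => by simpa using hstab _ hdet) FΩ QΩ hF hQ
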